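/- arXiv:1307.2427 — 10 statements merged into one kernel-verified Lean document; each statement's English description precedes it below -/
import Mathlib

section
/- Let Λ = (χ, E, δ) be an automaton with inputs and let x̄ ∈ χ. There exists a synchronizing sequence for the state x̄ if and only if for every pair of states x', x'' ∈ χ there exists a word w ∈ E* such that δ(x', w) = x̄ and δ(x'', w) = x̄. -/
/-- Extension of the transition function of an automaton with inputs to words:
`deltaStar δ x w` is the state reached from `x` after applying the input word `w`. -/
def deltaStar {χ E : Type} (δ : χ → E → χ) (x : χ) (w : List E) : χ :=
  w.foldl δ x

/-- The word `w` synchronizes the set of states `s` to the state `xbar`. A synchronizing sequence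
for `xbar` is the case `s = Set.univ`, and a word merging `x'` and `x''` to `xbar` is the case
`s = {x', x''}`. -/
def SynchronizesOn {χ E : Type} (δ : χ → E → χ) (xbar : χ) (s : Set χ) (w : List E) : Prop :=
  ∀ x ∈ s, deltaStar δ x w = xbar

section

variable {χ E : Type} {δ : χ → E → χ} {xbar : χ}

theorem deltaStar_append (x : χ) (w v : List E) :
    deltaStar δ x (w ++ v) = deltaStar δ (deltaStar δ x w) v :=
  List.foldl_append

theorem synchronizesOn_univ {w : List E} :
    SynchronizesOn δ xbar Set.univ w ↔ ∀ x, deltaStar δ x w = xbar := by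
  simp only [SynchronizesOn, Set.mem_univ, forall_const]

theorem synchronizesOn_pair {x y : χ} {w : List E} :
    SynchronizesOn δ xbar {x, y} w ↔ deltaStar δ x w = xbar ∧ deltaStar δ y w = xbar := by
  simp only [SynchronizesOn, Set.mem_insert_iff, Set.mem_singleton_iff, forall_eq_or_imp, forall_eq]

theorem SynchronizesOn.mono {s t : Set χ} {w : List E} (ht : SynchronizesOn δ xbar t w)
    (hst : s ⊆ t) : SynchronizesOn δ xbar s w :=
  fun x hx => ht x (hst hx)

/-- Since `v` fixes `xbar`, appending it does not undo the merging of `s` achieved by `w`. -/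
theorem SynchronizesOn.insert_append {s : Set χ} {x : χ} {w v : List E}
    (hw : SynchronizesOn δ xbar s w) (hv : SynchronizesOn δ xbar {deltaStar δ x w, xbar} v) :
    SynchronizesOn δ xbar (insert x s) (w ++ v) := by
  obtain ⟨hvx, hv_fix⟩ := synchronizesOn_pair.mp hv
  rintro y (rfl | hy)
  · rw [deltaStar_append, hvx]
  · rw [deltaStar_append, hw y hy, hv_fix]

theorem exists_synchronizesOn_of_finite {s : Set χ} (hs : s.Finite)
    (h : ∀ x, ∃ w, SynchronizesOn δ xbar {x, xbar} w) : ∃ w, SynchronizesOn δ xbar s w := by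
  induction s, hs using Set.Finite.induction_on with
  | empty => exact ⟨[], fun _ hx => hx.elim⟩
  | @insert x s _ _ ih =>
    obtain ⟨w, hw⟩ := ih
    obtain ⟨v, hv⟩ := h (deltaStar δ x w)
    exact ⟨w ++ v, hw.insert_append hv⟩

end

theorem exists_SS_iff_pairwise_mergeable_general {χ E : Type} [Finite χ]
    (δ : χ → E → χ) (xbar : χ) :
    (∃ w : List E, ∀ x : χ, deltaStar δ x w = xbar) ↔
      (∀ x' x'' : χ, ∃ w : List E,
        deltaStar δ x' w = xbar ∧ deltaStar δ x'' w = xbar) := by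
  simp only [← synchronizesOn_univ, ← synchronizesOn_pair]
  constructor
  · rintro ⟨w, hw⟩ x' x''
    exact ⟨w, hw.mono (Set.subset_univ _)⟩
  · intro h
    exact exists_synchronizesOn_of_finite Set.finite_univ fun x => h x xbar

/-- There exists a synchronizing sequence for state `x̄` iff every pair of states
can be merged to `x̄` by some word. -/
theorem exists_SS_iff_pairwise_mergeable {χ E : Type} [Fintype χ] [Nonempty χ]
    [Fintype E] [Nonempty E] (δ : χ → E → χ) (xbar : χ) :
    (∃ w : List E, ∀ x : χ, deltaStar δ x w = xbar) ↔
      (∀ x' x'' : χ, ∃ w : List E,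
        deltaStar δ x' w = xbar ∧ deltaStar δ x'' w = xbar) :=
  exists_SS_iff_pairwise_mergeable_general δ xbar
end

section
/- Let ⟨N, E, f⟩ be a deterministic synchronized Petri net and M₀ a marking such that the reachability set R = {M : ∃ w ∈ E*, M₀ →w M} is finite, and let M̄ ∈ R. Then there exists a word w̄ ∈ E* such that M →w̄ M̄ for every M ∈ R if and only if for every pair M₁, M₂ ∈ R there exists a word w ∈ E* with M₁ →w M̄ and M₂ →w M̄. -/
open scoped Classical BigOperators

/-- A synchronized Petri net `⟨N, E, f⟩`: `Pre`/`Post` incidence functions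
and a labeling `f` of transitions by input events. -/
structure SyncPN (P T E : Type) where
  Pre : P → T → ℕ
  Post : P → T → ℕ
  f : T → E

/-- A transition `t` is enabled at marking `M` if `M(p) ≥ Pre(p,t)` for all `p`. -/
def enabled {P T E : Type} (N : SyncPN P T E) (M : P → ℕ) (t : T) : Prop :=
  ∀ p, N.Pre p t ≤ M p

/-- Occurrence of input event `e` at marking `M`: all enabled transitions labeled `e`
fire simultaneously: `step M e (p) = M(p) + Σ Post(p,t) − Σ Pre(p,t)`,
the sums ranging over enabled transitions labeled `e`. -/
noncomputable def step {P T E : Type} [Fintype T] (N : SyncPN P T E) (M : P → ℕ)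
    (e : E) : P → ℕ := fun p =>
  M p + (∑ t : T, if N.f t = e ∧ enabled N M t then N.Post p t else 0)
      - ∑ t : T, if N.f t = e ∧ enabled N M t then N.Pre p t else 0

/-- Extension of `step` to input words: `M →w stepWord N M w`. -/
noncomputable def stepWord {P T E : Type} [Fintype T] (N : SyncPN P T E) (M : P → ℕ)
    (w : List E) : P → ℕ :=
  w.foldl (step N) M

/-- A net is deterministic if no place has two distinct output transitions
sharing the same label. -/
def deterministic {P T E : Type} (N : SyncPN P T E) : Prop :=
  ∀ (p : P) (t t' : T), t ≠ t' → 1 ≤ N.Pre p t → 1 ≤ N.Pre p t' → N.f t ≠ N.f t'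

/-- A state machine: each transition `t` has single input place `ins t`
and single output place `outs t`, with arc weight 1. -/
def isSM {P T E : Type} (N : SyncPN P T E) (ins outs : T → P) : Prop :=
  (∀ p t, N.Pre p t = if p = ins t then 1 else 0) ∧
  (∀ p t, N.Post p t = if p = outs t then 1 else 0)

/-- Strong connectedness of the associated graph of a state machine
(an arc from `ins t` to `outs t` for each transition `t`). -/
def stronglyConnected {P T : Type} (ins outs : T → P) : Prop :=
  ∀ p p' : P, Relation.ReflTransGen (fun a b => ∃ t, ins t = a ∧ outs t = b) p p'

/-!
The firing rule is the transition function of a (possibly infinite) automaton whose states are the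
markings. If `v` sends every state of `S` to `t`, and `w` merges `t` with the state reached from `s`
by reading `v`, then `v ++ w` sends every state of `insert s S` to `t`: states already sent to `t`
return there. So the states of a finite set can be absorbed one at a time, and closure under the
transitions guarantees that the pair to be merged at each stage is again one of the given pairs.
-/

/-- The input word `w` is a synchronizing sequence for `t` on `S`: reading `w` from any state of `S`
leads to `t`. The system is given by its transition function `δ`, and words are read from the
left. -/
def IsSynchronizing {σ α : Type*} (δ : σ → α → σ) (S : Set σ) (t : σ) (w : List α) : Prop :=
  ∀ s ∈ S, w.foldl δ s = t

section TransitionSystem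

variable {σ α : Type*} {δ : σ → α → σ} {R S : Set σ} {s t : σ} {v w : List α}

theorem isSynchronizing_pair {s₁ s₂ : σ} :
    IsSynchronizing δ {s₁, s₂} t w ↔ w.foldl δ s₁ = t ∧ w.foldl δ s₂ = t := by
  simp [IsSynchronizing]

theorem IsSynchronizing.append_insert (hv : IsSynchronizing δ S t v)
    (hw : IsSynchronizing δ {v.foldl δ s, t} t w) :
    IsSynchronizing δ (insert s S) t (v ++ w) := by
  obtain ⟨hs, ht⟩ := isSynchronizing_pair.mp hw
  rintro r (rfl | hr)
  · rw [List.foldl_append, hs]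
  · rw [List.foldl_append, hv r hr, ht]

theorem mapsTo_foldl (hR : ∀ a, Set.MapsTo (δ · a) R R) (w : List α) :
    Set.MapsTo (w.foldl δ) R R :=
  fun _ hs ↦ List.foldlRecOn w δ hs fun _ hr a _ ↦ hR a hr

theorem mapsTo_reachable (δ : σ → α → σ) (s₀ : σ) (a : α) :
    Set.MapsTo (δ · a) {s | ∃ w : List α, w.foldl δ s₀ = s}
      {s | ∃ w : List α, w.foldl δ s₀ = s} := by
  rintro _ ⟨w, rfl⟩
  exact ⟨w ++ [a], List.foldl_concat ..⟩

theorem exists_isSynchronizing_of_finite_subset (hR : ∀ a, Set.MapsTo (δ · a) R R)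
    (hpair : ∀ s₁ ∈ R, ∀ s₂ ∈ R, ∃ w, IsSynchronizing δ {s₁, s₂} t w)
    (hfin : S.Finite) (hSR : S ⊆ R) : ∃ w, IsSynchronizing δ S t w := by
  induction S, hfin using Set.Finite.induction_on with
  | empty => exact ⟨[], fun _ hs ↦ absurd hs (Set.notMem_empty _)⟩
  | @insert s S _ _ ih =>
    obtain ⟨hs, hS⟩ := Set.insert_subset_iff.mp hSR
    obtain ⟨v, hv⟩ := ih hS
    have ht : t ∈ R := by
      obtain ⟨w, hw⟩ := hpair s hs s hs
      exact (isSynchronizing_pair.mp hw).1 ▸ mapsTo_foldl hR w hs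
    obtain ⟨w, hw⟩ := hpair (v.foldl δ s) (mapsTo_foldl hR v hs) t ht
    exact ⟨v ++ w, hv.append_insert hw⟩

theorem exists_SS_iff_pairwise_mergeable_PN_general (hR : ∀ a, Set.MapsTo (δ · a) R R)
    (hfin : R.Finite) :
    (∃ w, IsSynchronizing δ R t w) ↔
      ∀ s₁ ∈ R, ∀ s₂ ∈ R, ∃ w : List α, w.foldl δ s₁ = t ∧ w.foldl δ s₂ = t := by
  simp only [← isSynchronizing_pair]
  refine ⟨fun ⟨w, hw⟩ s₁ h₁ s₂ h₂ ↦ ⟨w, ?_⟩,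
    fun hpair ↦ exists_isSynchronizing_of_finite_subset hR hpair hfin subset_rfl⟩
  exact isSynchronizing_pair.mpr ⟨hw s₁ h₁, hw s₂ h₂⟩

end TransitionSystem

/-- For a deterministic synchronized Petri net with finite reachability set `R` and
`M̄ ∈ R`, a synchronizing sequence for `M̄` exists iff every pair of reachable
markings can be merged to `M̄` by some common input word. -/
theorem exists_SS_iff_pairwise_mergeable_PN {P T E : Type} [Fintype P] [Fintype T]
    [Fintype E] (N : SyncPN P T E) (hdet : deterministic N) (M0 : P → ℕ)
    (R : Set (P → ℕ)) (hR : R = {M | ∃ w : List E, stepWord N M0 w = M})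
    (hfin : R.Finite) (Mbar : P → ℕ) (hMbar : Mbar ∈ R) :
    (∃ w : List E, ∀ M ∈ R, stepWord N M w = Mbar) ↔
      (∀ M₁ ∈ R, ∀ M₂ ∈ R, ∃ w : List E,
        stepWord N M₁ w = Mbar ∧ stepWord N M₂ w = Mbar) := by
  subst hR
  exact exists_SS_iff_pairwise_mergeable_PN_general (mapsTo_reachable (step N) M0) hfin
end

section
/- Let ⟨N, E, f⟩ be a deterministic synchronized state machine. Then for every marking M and every input event e ∈ E, the total token count is conserved: Σ_{p∈P} step(M, e)(p) = Σ_{p∈P} M(p). -/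
open scoped Classical BigOperators

/-! Determinism makes the truncated subtraction in `step` exact: at most one fired transition takes
tokens from a given place, and that transition is enabled. In the weighted sum of the resulting
balances over all places, a place invariant makes the tokens produced and consumed cancel,
transition by transition. In a state machine the constant weight `1` is such an invariant. -/

section

variable {P T E : Type} {N : SyncPN P T E}

/-- The transitions that fire simultaneously when the event `e` occurs at the marking `M`. -/
noncomputable def fired [Fintype T] (N : SyncPN P T E) (M : P → ℕ) (e : E) : Finset T :=
  {t | N.f t = e ∧ enabled N M t}

/-- Place invariants (P-invariants) of a net: weights on the places for which every transition
produces the same total weight of tokens as it consumes. Weights live in an arbitrary commutative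
monoid, written additively, rather than only in `ℤ`. -/
def IsPlaceInvariant {A : Type*} [AddCommMonoid A] [Fintype P] (N : SyncPN P T E) (w : P → A) :
    Prop :=
  ∀ t, ∑ p, N.Post p t • w p = ∑ p, N.Pre p t • w p

theorem mem_fired [Fintype T] {M : P → ℕ} {e : E} {t : T} :
    t ∈ fired N M e ↔ N.f t = e ∧ enabled N M t := by
  simp [fired]

theorem step_apply [Fintype T] (N : SyncPN P T E) (M : P → ℕ) (e : E) (p : P) :
    step N M e p = M p + ∑ t ∈ fired N M e, N.Post p t - ∑ t ∈ fired N M e, N.Pre p t := by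
  simp only [step, fired, Finset.sum_filter]

theorem deterministic.sum_pre_le (hdet : deterministic N) {M : P → ℕ} {e : E} {s : Finset T}
    (hs : ∀ t ∈ s, N.f t = e ∧ enabled N M t) (p : P) : ∑ t ∈ s, N.Pre p t ≤ M p := by
  obtain hzero | hne := eq_or_ne (∑ t ∈ s, N.Pre p t) 0
  · exact hzero.trans_le (Nat.zero_le _)
  obtain ⟨t, ht, hpre⟩ := Finset.exists_ne_zero_of_sum_ne_zero hne
  have hother : ∀ t' ∈ s, t' ≠ t → N.Pre p t' = 0 := by
    intro t' ht' htt'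
    by_contra hpre'
    exact hdet p t' t htt' (Nat.one_le_iff_ne_zero.mpr hpre') (Nat.one_le_iff_ne_zero.mpr hpre)
      ((hs t' ht').1.trans (hs t ht).1.symm)
  calc ∑ t' ∈ s, N.Pre p t' = N.Pre p t := Finset.sum_eq_single_of_mem t ht hother
    _ ≤ M p := (hs t ht).2 p

theorem deterministic.step_add_sum_pre [Fintype T] (hdet : deterministic N) (M : P → ℕ) (e : E)
    (p : P) :
    step N M e p + ∑ t ∈ fired N M e, N.Pre p t = M p + ∑ t ∈ fired N M e, N.Post p t := by
  have hle : ∑ t ∈ fired N M e, N.Pre p t ≤ M p := hdet.sum_pre_le (fun _ => mem_fired.mp) p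
  rw [step_apply, Nat.sub_add_cancel (hle.trans (Nat.le_add_right _ _))]

theorem IsPlaceInvariant.sum_post_eq_sum_pre {A : Type*} [AddCommMonoid A] [Fintype P] {w : P → A}
    (hw : IsPlaceInvariant N w) (s : Finset T) :
    ∑ p, (∑ t ∈ s, N.Post p t) • w p = ∑ p, (∑ t ∈ s, N.Pre p t) • w p := by
  simp only [Finset.sum_smul]
  rw [Finset.sum_comm, Finset.sum_comm (s := Finset.univ)]
  exact Finset.sum_congr rfl fun t _ => hw t

theorem isSM.isPlaceInvariant_iff {A : Type*} [AddCommMonoid A] [Fintype P] {ins outs : T → P}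
    (hSM : isSM N ins outs) {w : P → A} :
    IsPlaceInvariant N w ↔ ∀ t, w (outs t) = w (ins t) := by
  simp [IsPlaceInvariant, hSM.1, hSM.2, ite_smul]

theorem token_count_conserved_general {A : Type*} [AddCancelCommMonoid A] [Fintype P] [Fintype T]
    (hdet : deterministic N) {w : P → A} (hw : IsPlaceInvariant N w) (M : P → ℕ) (e : E) :
    ∑ p, step N M e p • w p = ∑ p, M p • w p := by
  refine add_right_cancel (b := ∑ p, (∑ t ∈ fired N M e, N.Pre p t) • w p) ?_
  calc ∑ p, step N M e p • w p + ∑ p, (∑ t ∈ fired N M e, N.Pre p t) • w p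
      = ∑ p, (step N M e p + ∑ t ∈ fired N M e, N.Pre p t) • w p := by
        simp only [add_smul, Finset.sum_add_distrib]
    _ = ∑ p, (M p + ∑ t ∈ fired N M e, N.Post p t) • w p := by
        simp only [hdet.step_add_sum_pre]
    _ = ∑ p, M p • w p + ∑ p, (∑ t ∈ fired N M e, N.Post p t) • w p := by
        simp only [add_smul, Finset.sum_add_distrib]
    _ = ∑ p, M p • w p + ∑ p, (∑ t ∈ fired N M e, N.Pre p t) • w p := by
        rw [hw.sum_post_eq_sum_pre]

end

/-- In a deterministic synchronized state machine the total token count is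
conserved by the occurrence of any input event. -/
theorem token_count_conserved {P T E : Type} [Fintype P] [Fintype T]
    (N : SyncPN P T E) (ins outs : T → P) (hSM : isSM N ins outs)
    (hdet : deterministic N) :
    ∀ (M : P → ℕ) (e : E), ∑ p : P, step N M e p = ∑ p : P, M p := by
  intro M e
  have hone : IsPlaceInvariant N (fun _ => 1 : P → ℕ) := hSM.isPlaceInvariant_iff.mpr fun _ => rfl
  simpa using token_count_conserved_general hdet hone M e
end

section
/- Let N = (P, T, Pre, Post) be a strongly connected state machine with P nonempty, and let M₀ be a marking with Σ_{p∈P} M₀(p) = k. Then the reachability set under transition firings is exactly the set of all distributions of k tokens: R(N, M₀) = { M : P → ℕ | Σ_{p∈P} M(p) = k }. -/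
open scoped Classical BigOperators

/-- One firing step of a Petri net with incidence functions `Pre`, `Post`:
some enabled transition `t` fires, yielding `M' = M + Post(·,t) − Pre(·,t)`. -/
def fireStep {P T : Type} (Pre Post : P → T → ℕ) (M M' : P → ℕ) : Prop :=
  ∃ t : T, (∀ p, Pre p t ≤ M p) ∧ M' = fun p => M p + Post p t - Pre p t

/-- Reachability via finite firing sequences. -/
def reach {P T : Type} (Pre Post : P → T → ℕ) (M0 M : P → ℕ) : Prop :=
  Relation.ReflTransGen (fireStep Pre Post) M0 M

/-!
View a marking as the multiset of the places its tokens occupy. In a state machine, firing a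
transition moves one token along an arc, and the other tokens never obstruct it. Hence the tokens
walk independently in the associated graph: a multiset of places is reachable from another iff
their elements can be matched so that each pair is joined by a path. When any two places are
joined by a path, such a matching exists iff the two multisets have the same cardinality.
-/

open Relation (ReflTransGen)

section Marking

variable {P : Type*}

/-- The marking with one token for each occurrence of a place in `s`. Multisets of places thus
encode the markings with finitely many tokens, even if there are infinitely many places. -/
noncomputable def marking (s : Multiset P) : P → ℕ := fun p => s.count p

lemma marking_cons (a : P) (s : Multiset P) : marking (a ::ₘ s) = marking s + Pi.single a 1 := by
  funext p
  simp only [marking, Multiset.count_cons, Pi.add_apply, Pi.single_apply]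

lemma support_marking (s : Multiset P) : (marking s).support = s.toFinset := by
  ext p
  simp [marking]

lemma finsum_marking (s : Multiset P) : ∑ᶠ p, marking s p = s.card := by
  rw [finsum_eq_sum_of_support_subset _ (support_marking s).subset]
  exact s.toFinset_sum_count_eq

lemma exists_marking_eq_of_finite_support {M : P → ℕ} (hM : M.support.Finite) :
    ∃ s, marking s = M :=
  ⟨(Finsupp.ofSupportFinite M hM).toMultiset, funext fun p => Finsupp.count_toMultiset _ p⟩

lemma exists_marking_eq_and_card_eq_iff {M : P → ℕ} {k : ℕ} :
    (∃ s, marking s = M ∧ s.card = k) ↔ M.support.Finite ∧ ∑ᶠ p, M p = k := by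
  constructor
  · rintro ⟨s, rfl, rfl⟩
    exact ⟨support_marking s ▸ s.toFinset.finite_toSet, finsum_marking s⟩
  · rintro ⟨hM, rfl⟩
    obtain ⟨s, rfl⟩ := exists_marking_eq_of_finite_support hM
    exact ⟨s, rfl, (finsum_marking s).symm⟩

end Marking

lemma multisetRel_iff_card_eq_of_forall {α : Type*} {r : α → α → Prop} (hr : ∀ a b, r a b)
    {s t : Multiset α} : Multiset.Rel r s t ↔ s.card = t.card :=
  ⟨Multiset.card_eq_card_of_rel, Multiset.rel_of_forall fun a b _ _ => hr a b⟩

lemma reach.add_right {P T : Type} {Pre Post : P → T → ℕ} {M M' : P → ℕ}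
    (h : reach Pre Post M M') (X : P → ℕ) : reach Pre Post (M + X) (M' + X) := by
  refine ReflTransGen.lift (· + X) ?_ _ _ h
  rintro M _ ⟨t, enabled, rfl⟩
  refine ⟨t, fun p => (enabled p).trans (Nat.le_add_right _ _), funext fun p => ?_⟩
  have := enabled p
  simp only [Pi.add_apply]
  omega

/-- The arcs of the graph associated with a state machine whose transition `t` leads from the
place `ins t` to the place `outs t`. -/
def Arc {P T : Type*} (ins outs : T → P) (a b : P) : Prop := ∃ t, ins t = a ∧ outs t = b

/-- `Pre` and `Post` are the incidence functions of the state machine whose transition `t` has the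
single input place `ins t` and the single output place `outs t`. -/
structure IsStateMachine {P T : Type*} (Pre Post : P → T → ℕ) (ins outs : T → P) : Prop where
  pre_eq : ∀ p t, Pre p t = if p = ins t then 1 else 0
  post_eq : ∀ p t, Post p t = if p = outs t then 1 else 0

namespace IsStateMachine

variable {P T : Type} {Pre Post : P → T → ℕ} {ins outs : T → P}

lemma fireStep_marking_iff (h : IsStateMachine Pre Post ins outs) {s : Multiset P} {M : P → ℕ} :
    fireStep Pre Post (marking s) M ↔
      ∃ t u, s = ins t ::ₘ u ∧ M = marking (outs t ::ₘ u) := by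
  constructor
  · rintro ⟨t, enabled, rfl⟩
    have ins_mem : ins t ∈ s := by
      simpa [h.pre_eq, marking, Nat.one_le_iff_ne_zero] using enabled (ins t)
    obtain ⟨u, rfl⟩ := Multiset.exists_cons_of_mem ins_mem
    refine ⟨t, u, rfl, funext fun p => ?_⟩
    simp only [h.pre_eq, h.post_eq, marking_cons, Pi.add_apply, Pi.single_apply]
    omega
  · rintro ⟨t, u, rfl, rfl⟩
    refine ⟨t, fun p => ?_, funext fun p => ?_⟩ <;>
    · simp only [h.pre_eq, h.post_eq, marking_cons, Pi.add_apply, Pi.single_apply]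
      omega

lemma exists_rel_of_reach (h : IsStateMachine Pre Post ins outs) {s : Multiset P} {M : P → ℕ}
    (hM : reach Pre Post (marking s) M) :
    ∃ t, marking t = M ∧ s.Rel (ReflTransGen (Arc ins outs)) t := by
  induction hM with
  | refl => exact ⟨s, rfl, Multiset.rel_refl_of_refl_on fun _ _ => .refl⟩
  | tail _ step ih =>
    obtain ⟨_, rfl, paths⟩ := ih
    obtain ⟨t, u, rfl, rfl⟩ := h.fireStep_marking_iff.1 step
    have arc : ReflTransGen (Arc ins outs) (ins t) (outs t) := .single ⟨t, rfl, rfl⟩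
    exact ⟨_, rfl, paths.trans _ (.cons arc (Multiset.rel_refl_of_refl_on fun _ _ => .refl))⟩

lemma reach_marking_cons (h : IsStateMachine Pre Post ins outs) {a b : P}
    (path : ReflTransGen (Arc ins outs) a b) (s : Multiset P) :
    reach Pre Post (marking (a ::ₘ s)) (marking (b ::ₘ s)) := by
  refine ReflTransGen.lift (fun p => marking (p ::ₘ s)) ?_ _ _ path
  rintro _ _ ⟨t, rfl, rfl⟩
  exact h.fireStep_marking_iff.2 ⟨t, s, rfl, rfl⟩

lemma reach_of_rel (h : IsStateMachine Pre Post ins outs) {s t : Multiset P}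
    (paths : s.Rel (ReflTransGen (Arc ins outs)) t) :
    reach Pre Post (marking s) (marking t) := by
  induction paths with
  | zero => exact .refl
  | @cons a b s t path _ ih =>
    have rest : reach Pre Post (marking (b ::ₘ s)) (marking (b ::ₘ t)) := by
      simpa only [marking_cons] using ih.add_right (Pi.single b 1)
    exact (h.reach_marking_cons path s).trans rest

theorem reach_marking_iff (h : IsStateMachine Pre Post ins outs) {s : Multiset P} {M : P → ℕ} :
    reach Pre Post (marking s) M ↔
      ∃ t, marking t = M ∧ s.Rel (ReflTransGen (Arc ins outs)) t :=
  ⟨h.exists_rel_of_reach, by rintro ⟨t, rfl, paths⟩; exact h.reach_of_rel paths⟩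

end IsStateMachine

theorem reach_set_eq_token_distributions_general {P T : Type} {Pre Post : P → T → ℕ}
    {ins outs : T → P} (h : IsStateMachine Pre Post ins outs)
    (hsc : ∀ a b : P, ReflTransGen (Arc ins outs) a b)
    {M0 : P → ℕ} (hM0 : M0.support.Finite) {k : ℕ} (hk : ∑ᶠ p, M0 p = k) :
    {M : P → ℕ | reach Pre Post M0 M} = {M : P → ℕ | M.support.Finite ∧ ∑ᶠ p, M p = k} := by
  obtain ⟨s, rfl, rfl⟩ := exists_marking_eq_and_card_eq_iff.2 ⟨hM0, hk⟩
  have rel_iff (t : Multiset P) : s.Rel (ReflTransGen (Arc ins outs)) t ↔ t.card = s.card :=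
    (multisetRel_iff_card_eq_of_forall hsc).trans eq_comm
  ext M
  simp only [Set.mem_ofPred_eq, h.reach_marking_iff, rel_iff, exists_marking_eq_and_card_eq_iff]

/-- For a strongly connected state machine with `k` tokens, the reachability set is
exactly the set of all distributions of the `k` tokens over the places. -/
theorem reach_set_eq_token_distributions {P T : Type} [Fintype P] [Fintype T]
    [Nonempty P] (Pre Post : P → T → ℕ) (ins outs : T → P)
    (hPre : ∀ p t, Pre p t = if p = ins t then 1 else 0)
    (hPost : ∀ p t, Post p t = if p = outs t then 1 else 0)
    (hsc : ∀ p p' : P,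
      Relation.ReflTransGen (fun a b => ∃ t, ins t = a ∧ outs t = b) p p')
    (M0 : P → ℕ) (k : ℕ) (hk : ∑ p : P, M0 p = k) :
    {M : P → ℕ | reach Pre Post M0 M} = {M : P → ℕ | ∑ p : P, M p = k} := by
  simpa only [finsum_eq_sum_of_fintype, Set.toFinite, true_and] using
    reach_set_eq_token_distributions_general ⟨hPre, hPost⟩ hsc M0.support.toFinite
      ((finsum_eq_sum_of_fintype M0).trans hk)
end

section
/- Let N = (P, T, Pre, Post) be a strongly connected state machine with m = |P| ≥ 1 places, and let M₀ be a marking with Σ_{p∈P} M₀(p) = k. Then the number of reachable markings is |R(N, M₀)| = C(m + k − 1, m − 1) (the binomial coefficient). -/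
open scoped Classical BigOperators

/-!
Firing is preserved by adding a fixed marking, so reachability is compatible with sums of markings.
In a strongly connected state machine a single token can travel from any place to any other; summing
over the tokens of a marking, all of them can be gathered at one place, and conversely released from
there into any distribution. As firing conserves the number `k` of tokens, the reachable markings
are exactly the distributions of `k` tokens over the places, i.e. the multisets of `k` places.
-/

theorem pi_single_sum {ι α A : Type*} [DecidableEq α] [AddCommMonoid A] (s : Finset ι)
    (f : ι → A) (a : α) :
    (Pi.single a (∑ i ∈ s, f i) : α → A) = ∑ i ∈ s, Pi.single a (f i) :=
  map_sum (AddMonoidHom.single (fun _ => A) a) f s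

theorem ncard_setOf_sum_eq (α : Type*) [Fintype α] (k : ℕ) :
    {f : α → ℕ | ∑ a, f a = k}.ncard = (Fintype.card α).multichoose k := by
  rw [← Nat.card_coe_set_eq, Set.coe_ofPred, ← Nat.card_congr (Sym.equivNatSumOfFintype α k),
    Nat.card_eq_fintype_card, Sym.card_sym_eq_multichoose]

section PetriNet

variable {P T : Type} {Pre Post : P → T → ℕ} {M M' N N' : P → ℕ}

theorem fireStep.add_left (h : fireStep Pre Post M M') (A : P → ℕ) :
    fireStep Pre Post (A + M) (A + M') := by
  obtain ⟨t, hen, rfl⟩ := h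
  refine ⟨t, fun p => le_add_left (hen p), funext fun p => ?_⟩
  have := hen p
  simp only [Pi.add_apply]
  omega

theorem reach.add_left (h : reach Pre Post M M') (A : P → ℕ) :
    reach Pre Post (A + M) (A + M') :=
  Relation.ReflTransGen.lift (A + ·) (fun _ _ hstep => fireStep.add_left hstep A) _ _ h

theorem reach.add (hM : reach Pre Post M M') (hN : reach Pre Post N N') :
    reach Pre Post (M + N) (M' + N') := by
  have hMN : reach Pre Post (N + M) (N + M') := hM.add_left N
  rw [add_comm N, add_comm N] at hMN
  exact Relation.ReflTransGen.trans hMN (hN.add_left M')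

theorem reach.nsmul (h : reach Pre Post M M') (n : ℕ) : reach Pre Post (n • M) (n • M') := by
  induction n with
  | zero =>
    rw [zero_nsmul, zero_nsmul]
    exact Relation.ReflTransGen.refl
  | succ n ih => simpa only [succ_nsmul] using ih.add h

theorem reach.sum {ι : Type*} (s : Finset ι) {f g : ι → P → ℕ}
    (h : ∀ i, reach Pre Post (f i) (g i)) : reach Pre Post (∑ i ∈ s, f i) (∑ i ∈ s, g i) :=
  Finset.sum_hom_rel Relation.ReflTransGen.refl fun i _ _ ih => (h i).add ih

theorem fireStep.sum_eq [Fintype P] (hcons : ∀ t, ∑ p, Pre p t = ∑ p, Post p t)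
    (h : fireStep Pre Post M M') : ∑ p, M' p = ∑ p, M p := by
  obtain ⟨t, hen, rfl⟩ := h
  have hbalance : ∑ p, (M p + Post p t - Pre p t) + ∑ p, Pre p t = ∑ p, M p + ∑ p, Post p t := by
    rw [← Finset.sum_add_distrib, ← Finset.sum_add_distrib]
    exact Finset.sum_congr rfl fun p _ => Nat.sub_add_cancel (le_add_right (hen p))
  rw [hcons t] at hbalance
  exact Nat.add_right_cancel hbalance

theorem reach.sum_eq [Fintype P] (hcons : ∀ t, ∑ p, Pre p t = ∑ p, Post p t)
    (h : reach Pre Post M M') : ∑ p, M' p = ∑ p, M p := by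
  induction h with
  | refl => rfl
  | tail _ hstep ih => exact (hstep.sum_eq hcons).trans ih

end PetriNet

/-- State machines: each transition `t` consumes one token from `ins t`, produces one token in
`outs t`, and touches no other place. The maps `ins` and `outs` are parameters rather than fields,
so that the associated graph can refer to them. -/
structure IsStateMachine_s7 {P T : Type} (Pre Post : P → T → ℕ) (ins outs : T → P) : Prop where
  pre_eq : ∀ p t, Pre p t = if p = ins t then 1 else 0
  post_eq : ∀ p t, Post p t = if p = outs t then 1 else 0

/-- The arc relation of the associated graph of a state machine; parallel arcs are identified,
since only the existence of directed paths matters. -/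
def IsArc {P T : Type} (ins outs : T → P) (p q : P) : Prop :=
  ∃ t, ins t = p ∧ outs t = q

namespace IsStateMachine_s7

variable {P T : Type} {Pre Post : P → T → ℕ} {ins outs : T → P}

theorem sum_pre_eq_sum_post [Fintype P] (hN : IsStateMachine_s7 Pre Post ins outs) (t : T) :
    ∑ p, Pre p t = ∑ p, Post p t := by
  simp [hN.pre_eq, hN.post_eq]

theorem fireStep_single (hN : IsStateMachine_s7 Pre Post ins outs) (t : T) :
    fireStep Pre Post (Pi.single (ins t) 1) (Pi.single (outs t) 1) := by
  refine ⟨t, fun p => ?_, funext fun p => ?_⟩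
  · rw [hN.pre_eq, Pi.single_apply]
  · rw [hN.pre_eq, hN.post_eq, Pi.single_apply, Pi.single_apply, Nat.add_sub_cancel_left]

theorem reach_single (hN : IsStateMachine_s7 Pre Post ins outs) {p q : P}
    (hpq : Relation.ReflTransGen (IsArc ins outs) p q) (n : ℕ) :
    reach Pre Post (Pi.single p n) (Pi.single q n) := by
  have htoken : reach Pre Post (Pi.single p 1) (Pi.single q 1) :=
    hpq.lift (Pi.single · 1) <| by
      rintro _ _ ⟨t, rfl, rfl⟩
      exact hN.fireStep_single t
  simpa only [← Pi.single_smul, smul_eq_mul, mul_one] using htoken.nsmul n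

theorem reach_single_sum [Fintype P] (hN : IsStateMachine_s7 Pre Post ins outs) {q : P}
    (hq : ∀ p, Relation.ReflTransGen (IsArc ins outs) p q) (M : P → ℕ) :
    reach Pre Post M (Pi.single q (∑ p, M p)) := by
  have h := reach.sum Finset.univ fun p => hN.reach_single (hq p) (M p)
  rwa [Finset.univ_sum_single, ← pi_single_sum] at h

theorem single_sum_reach [Fintype P] (hN : IsStateMachine_s7 Pre Post ins outs) {q : P}
    (hq : ∀ p, Relation.ReflTransGen (IsArc ins outs) q p) (M : P → ℕ) :
    reach Pre Post (Pi.single q (∑ p, M p)) M := by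
  have h := reach.sum Finset.univ fun p => hN.reach_single (hq p) (M p)
  rwa [Finset.univ_sum_single, ← pi_single_sum] at h

theorem reach_iff_sum_eq [Fintype P] (hN : IsStateMachine_s7 Pre Post ins outs)
    (hsc : ∀ p q, Relation.ReflTransGen (IsArc ins outs) p q) {M M' : P → ℕ} :
    reach Pre Post M M' ↔ ∑ p, M' p = ∑ p, M p := by
  refine ⟨reach.sum_eq hN.sum_pre_eq_sum_post, fun hsum => ?_⟩
  obtain hP | ⟨⟨q⟩⟩ := isEmpty_or_nonempty P
  · rw [Subsingleton.elim M M']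
    exact Relation.ReflTransGen.refl
  · have hgather := hN.reach_single_sum (fun p => hsc p q) M
    rw [← hsum] at hgather
    exact Relation.ReflTransGen.trans hgather (hN.single_sum_reach (hsc q) M')

end IsStateMachine_s7

theorem card_reach_set_general {P T : Type} [Fintype P] [Nonempty P]
    {Pre Post : P → T → ℕ} {ins outs : T → P} (hN : IsStateMachine_s7 Pre Post ins outs)
    (hsc : ∀ p q, Relation.ReflTransGen (IsArc ins outs) p q)
    {M0 : P → ℕ} {k : ℕ} (hk : ∑ p, M0 p = k) :
    {M : P → ℕ | reach Pre Post M0 M}.ncard =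
      (Fintype.card P + k - 1).choose (Fintype.card P - 1) := by
  have hcard : 0 < Fintype.card P := Fintype.card_pos
  calc {M : P → ℕ | reach Pre Post M0 M}.ncard
      = {M : P → ℕ | ∑ p, M p = k}.ncard := by simp only [hN.reach_iff_sum_eq hsc, hk]
    _ = (Fintype.card P).multichoose k := ncard_setOf_sum_eq P k
    _ = (Fintype.card P + k - 1).choose k := Nat.multichoose_eq _ _
    _ = (Fintype.card P + k - 1).choose (Fintype.card P - 1) :=
      Nat.choose_symm_of_eq_add (by omega)

/-- For a strongly connected state machine with `m ≥ 1` places and `k` tokens, the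
number of reachable markings is the binomial coefficient `C(m + k − 1, m − 1)`. -/
theorem card_reach_set {P T : Type} [Fintype P] [Fintype T] [Nonempty P]
    (Pre Post : P → T → ℕ) (ins outs : T → P)
    (hPre : ∀ p t, Pre p t = if p = ins t then 1 else 0)
    (hPost : ∀ p t, Post p t = if p = outs t then 1 else 0)
    (hsc : ∀ p p' : P,
      Relation.ReflTransGen (fun a b => ∃ t, ins t = a ∧ outs t = b) p p')
    (M0 : P → ℕ) (k : ℕ) (hk : ∑ p : P, M0 p = k) :
    {M : P → ℕ | reach Pre Post M0 M}.ncard =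
      (Fintype.card P + k - 1).choose (Fintype.card P - 1) :=
  card_reach_set_general ⟨hPre, hPost⟩ hsc hk
end

section
/- Let ⟨N, E, f⟩ be a deterministic, strongly connected synchronized state machine and let σ = t₁ t₂ … t_r be a synchronizing transition sequence for P and p̄ ∈ P, with corresponding directed path ρ = ⟨p₀ t₁ p₁ … t_r p_r⟩, p̄ = p_r. Let w̄ = f(t₁) f(t₂) … f(t_r). Then w̄ is a 1-SS for the marking M̄ with M̄(p̄) = 1 and M̄(p) = 0 for p ≠ p̄: for every marking M with Σ_{p∈P} M(p) = 1 it holds M →w̄ M̄. -/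
open scoped Classical BigOperators

/-!
While the word is read, the token stays either at the current place `ps j` of the path or at a place
the path has not visited yet. A token at the current place follows the path, by determinism. If a
token elsewhere is moved by the label of `ts j`, then by C1 the transition moving it is some `ts m`,
and `j < m` because its source is unvisited; by C2 its target `ps (m + 1)` then differs from all of
`ps 0, …, ps m`, so it is unvisited too. As the path visits every place, at the end the token can
only be at its last place.
-/

/-- The labelled path `ps 0, ts 0, ps 1, …, ts (r - 1), ps r` satisfies conditions C1 and C2 of
a synchronizing transition sequence. Transitions are numbered from `0`: `ts m` is `t_{m+1}`; C2 is
indexed by `m = k - 1`. -/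
structure IsSynchronizingPath {P T E : Type*} (f : T → E) (ins outs : T → P) (r : ℕ)
    (ps : ℕ → P) (ts : ℕ → T) : Prop where
  ins_eq : ∀ i < r, ins (ts i) = ps i
  outs_eq : ∀ i < r, outs (ts i) = ps (i + 1)
  exists_eq_of_label_eq : ∀ t, ∀ i < r, f t = f (ts i) → ∃ m < r, ts m = t
  label_ne_of_revisit : ∀ i m, i ≤ m → m < r → ps i = ps (m + 1) →
    ∀ j < m, f (ts j) ≠ f (ts m)

/-- The place `q` is the `j`-th place of the path `ps` or is not among its places `0, …, j`: the
invariant satisfied by the place of the token after `j` letters. -/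
def CurrentOrUnvisited {P : Type*} (ps : ℕ → P) (j : ℕ) (q : P) : Prop :=
  ∀ i ≤ j, ps i = q → ps j = q

theorem CurrentOrUnvisited.succ {P : Type*} {ps : ℕ → P} {j : ℕ} {q : P}
    (hq : CurrentOrUnvisited ps j q) (hne : ps j ≠ q) : CurrentOrUnvisited ps (j + 1) q := by
  intro i hi hiq
  rcases Nat.le_succ_iff.mp hi with hij | rfl
  · exact absurd (hq i hij hiq) hne
  · exact hiq

theorem exists_eq_single_of_sum_eq_one {ι : Type*} [Fintype ι] {M : ι → ℕ}
    (hM : ∑ i, M i = 1) : ∃ i, M = Pi.single i 1 := by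
  have hsum : (Finsupp.equivFunOnFinite.symm M).sum (fun _ n ↦ n) = 1 := by
    rwa [Finsupp.sum_fintype _ _ fun _ ↦ rfl]
  obtain ⟨i, hi⟩ := (Finsupp.sum_eq_one_iff _).mp hsum
  refine ⟨i, ?_⟩
  rw [← Finsupp.single_eq_pi_single, ← hi, Finsupp.coe_equivFunOnFinite_symm]

namespace IsSynchronizingPath

variable {P T E : Type*} {f : T → E} {ins outs : T → P} {r : ℕ} {ps : ℕ → P} {ts : ℕ → T}
  {j : ℕ}

theorem currentOrUnvisited_succ_outs (h : IsSynchronizingPath f ins outs r ps ts)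
    (hinj : Function.Injective fun t ↦ (ins t, f t)) (hj : j < r) {t : T}
    (ht : f t = f (ts j)) (hq : CurrentOrUnvisited ps j (ins t)) :
    CurrentOrUnvisited ps (j + 1) (outs t) := by
  intro i hi hit
  obtain ⟨m, hm, rfl⟩ := h.exists_eq_of_label_eq t j hj ht
  rcases le_or_gt m j with hmj | hjm
  · have hcurrent : ps j = ins (ts m) := hq m hmj (h.ins_eq m hm).symm
    have hsame : ts m = ts j := hinj (Prod.ext (hcurrent.symm.trans (h.ins_eq j hj).symm) ht)
    rw [hsame, h.outs_eq j hj]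
  · have hrevisit : ps i = ps (m + 1) := hit.trans (h.outs_eq m hm)
    exact absurd ht.symm (h.label_ne_of_revisit i m (hi.trans hjm) hm hrevisit j hjm)

end IsSynchronizingPath

section StateMachine

variable {P T E : Type} {N : SyncPN P T E} {ins outs : T → P}

theorem isSM.enabled_single_iff (hSM : isSM N ins outs) {q : P} {t : T} :
    enabled N (Pi.single q 1) t ↔ ins t = q := by
  constructor
  · intro hen
    by_contra hne
    simpa [hSM.1, hne] using hen (ins t)
  · rintro rfl p
    rw [hSM.1, Pi.single_apply]

theorem isSM.injective_ins_label (hSM : isSM N ins outs) (hdet : deterministic N) :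
    Function.Injective fun t ↦ (ins t, N.f t) := by
  intro t t' heq
  obtain ⟨hins, hlabel⟩ := Prod.mk.inj heq
  by_contra hne
  exact hdet (ins t) t t' hne (by simp [hSM.1]) (by simp [hSM.1, hins]) hlabel

variable [Fintype T]

theorem isSM.step_single_ins (hSM : isSM N ins outs) (hdet : deterministic N) (t : T) :
    step N (Pi.single (ins t) 1) (N.f t) = Pi.single (outs t) 1 := by
  have hfires : ∀ t', N.f t' = N.f t ∧ enabled N (Pi.single (ins t) 1) t' ↔ t' = t := by
    intro t'
    rw [hSM.enabled_single_iff]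
    constructor
    · rintro ⟨hlabel, hins⟩
      exact hSM.injective_ins_label hdet (Prod.ext hins hlabel)
    · rintro rfl
      exact ⟨rfl, rfl⟩
  funext p
  simp only [step, hfires, Finset.sum_ite_eq', Finset.mem_univ, if_true, hSM.1, hSM.2,
    Pi.single_apply]
  exact Nat.add_sub_cancel_left _ _

theorem isSM.step_single_of_forall_ne (hSM : isSM N ins outs) {q : P} {e : E}
    (hstay : ∀ t, ins t = q → N.f t ≠ e) : step N (Pi.single q 1) e = Pi.single q 1 := by
  have hidle : ∀ t, ¬(N.f t = e ∧ enabled N (Pi.single q 1) t) := fun t ⟨hlabel, hen⟩ ↦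
    hstay t (hSM.enabled_single_iff.mp hen) hlabel
  funext p
  simp [step, hidle]

theorem stepWord_map_range_succ (N : SyncPN P T E) (M : P → ℕ) (w : ℕ → E) (j : ℕ) :
    stepWord N M ((List.range (j + 1)).map w) =
      step N (stepWord N M ((List.range j).map w)) (w j) := by
  simp [stepWord, List.range_succ]

namespace IsSynchronizingPath

variable {r : ℕ} {ps : ℕ → P} {ts : ℕ → T} {j : ℕ}

theorem exists_step_single (h : IsSynchronizingPath N.f ins outs r ps ts)
    (hSM : isSM N ins outs) (hdet : deterministic N) (hj : j < r) {q : P}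
    (hq : CurrentOrUnvisited ps j q) :
    ∃ q', step N (Pi.single q 1) (N.f (ts j)) = Pi.single q' 1 ∧
      CurrentOrUnvisited ps (j + 1) q' := by
  by_cases hmove : ∃ t, ins t = q ∧ N.f t = N.f (ts j)
  · obtain ⟨t, rfl, ht⟩ := hmove
    exact ⟨outs t, ht ▸ hSM.step_single_ins hdet t,
      h.currentOrUnvisited_succ_outs (hSM.injective_ins_label hdet) hj ht hq⟩
  · push Not at hmove
    have hne : ps j ≠ q := fun heq ↦ hmove (ts j) ((h.ins_eq j hj).trans heq) rfl
    exact ⟨q, hSM.step_single_of_forall_ne hmove, hq.succ hne⟩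

theorem exists_stepWord_single (h : IsSynchronizingPath N.f ins outs r ps ts)
    (hSM : isSM N ins outs) (hdet : deterministic N) (hj : j ≤ r) (q : P) :
    ∃ q', stepWord N (Pi.single q 1) ((List.range j).map fun i ↦ N.f (ts i)) = Pi.single q' 1 ∧
      CurrentOrUnvisited ps j q' := by
  induction j with
  | zero =>
    refine ⟨q, rfl, fun i hi hiq ↦ ?_⟩
    rwa [Nat.le_zero.mp hi] at hiq
  | succ j ih =>
    obtain ⟨q', hword, hq'⟩ := ih (Nat.le_of_succ_le hj)
    rw [stepWord_map_range_succ, hword]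
    exact h.exists_step_single hSM hdet hj hq'

end IsSynchronizingPath

theorem STS_gives_one_SS_general [Fintype P] {r : ℕ} {ps : ℕ → P} {ts : ℕ → T}
    (hSM : isSM N ins outs) (hdet : deterministic N)
    (hpath : IsSynchronizingPath N.f ins outs r ps ts) (hvisit : ∀ p, ∃ i ≤ r, ps i = p)
    {M : P → ℕ} (hM : ∑ p, M p = 1) :
    stepWord N M ((List.range r).map fun i ↦ N.f (ts i)) = Pi.single (ps r) 1 := by
  obtain ⟨q, rfl⟩ := exists_eq_single_of_sum_eq_one hM
  obtain ⟨q', hword, hq'⟩ := hpath.exists_stepWord_single hSM hdet le_rfl q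
  obtain ⟨i, hi, hiq'⟩ := hvisit q'
  rw [hword, hq' i hi hiq']

end StateMachine

/-- Proposition 2: if `σ = ts 0 … ts (r-1)` is a synchronizing transition sequence
for `P` and `p̄` (with directed path `ps 0, ps 1, …, ps r` visiting all places,
ending at `p̄ = ps r`, satisfying conditions C1 and C2), then the word
`f(t₁)…f(t_r)` is a 1-SS driving the single token to `p̄`. -/
theorem STS_gives_one_SS {P T E : Type} [Fintype P] [Fintype T]
    (N : SyncPN P T E) (ins outs : T → P)
    (hSM : isSM N ins outs) (hdet : deterministic N)
    (hsc : stronglyConnected ins outs)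
    (r : ℕ) (ps : ℕ → P) (ts : ℕ → T) (pbar : P)
    (hpath : ∀ i < r, ins (ts i) = ps i ∧ outs (ts i) = ps (i + 1))
    (hvisit : ∀ p : P, ∃ i ≤ r, ps i = p)
    (hend : ps r = pbar)
    (hnotbar : ∀ i < r, ps i ≠ pbar)
    (hC1 : ∀ t' : T, (∀ i < r, ts i ≠ t') → ∀ i < r, N.f t' ≠ N.f (ts i))
    (hC2 : ∀ i k, i < k → k ≤ r → ps i = ps k →
      ∀ j, j + 1 < k → N.f (ts j) ≠ N.f (ts (k - 1))) :
    ∀ M : P → ℕ, (∑ p : P, M p = 1) →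
      stepWord N M ((List.range r).map fun i => N.f (ts i)) =
        fun p => if p = pbar then 1 else 0 := by
  intro M hM
  have hsync : IsSynchronizingPath N.f ins outs r ps ts :=
    { ins_eq := fun i hi ↦ (hpath i hi).1
      outs_eq := fun i hi ↦ (hpath i hi).2
      exists_eq_of_label_eq := fun t i hi ht ↦ by
        by_contra! hnone
        exact hC1 t hnone i hi ht
      label_ne_of_revisit := fun i m him hm heq j hjm ↦
        hC2 i (m + 1) (Nat.lt_succ_of_le him) hm heq j (Nat.succ_lt_succ hjm) }
  rw [STS_gives_one_SS_general hSM hdet hsync hvisit hM, hend]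
  exact funext (Pi.single_apply pbar 1)
end

section
/- Let ⟨N, E, f⟩ be a deterministic, strongly connected synchronized state machine, let p̄ ∈ P, and let w ∈ E* be a 1-SS for p̄, i.e. every marking with exactly one token is driven by w to the marking M̄ with M̄(p̄) = 1 and 0 elsewhere. Suppose that no letter of w equals f(t) for any transition t with in(t) = p̄ (w contains no symbol labeling an output transition of p̄). Then for every k ≥ 1, w^k is a k-SS: every marking M with Σ_{p∈P} M(p) = k satisfies M →(w^k) M̄_k, where M̄_k(p̄) = k and M̄_k(p) = 0 for p ≠ p̄. -/
open scoped Classical BigOperators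

/-!
A place from which no letter of `w` takes tokens keeps whatever it holds: adding tokens there
commutes with running `w`. Moreover, in a deterministic state machine `w` preserves the pointwise
order of markings. So when some `q ≠ p̄` is marked, `M` dominates the `M(p̄)` tokens on `p̄`
together with one token on `q`; as `w` brings the latter to `p̄`, at least `M(p̄) + 1` tokens are
on `p̄` after `w`. Since tokens are conserved, each occurrence of `w` brings at least one of the
missing tokens to `p̄`.
-/

theorem eq_pi_single_of_sum_le_apply {ι R : Type*} [Fintype ι] [AddCommMonoid R] [PartialOrder R]
    [CanonicallyOrderedAdd R] [IsOrderedCancelAddMonoid R] {g : ι → R} {i : ι}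
    (h : ∑ j, g j ≤ g i) : g = Pi.single i (∑ j, g j) := by
  have hsum : ∑ j, g j = g i :=
    h.antisymm (Finset.single_le_sum_of_canonicallyOrdered (Finset.mem_univ i))
  have hle : Pi.single i (g i) ≤ g := update_le_iff.2 ⟨le_rfl, fun _ _ => zero_le⟩
  have hnlt : ¬ Pi.single i (g i) < g := fun hlt =>
    (Fintype.sum_strictMono hlt).ne ((Fintype.sum_pi_single' i (g i)).trans hsum.symm)
  rw [hsum]
  exact (hle.eq_of_not_lt hnlt).symm

namespace SyncPN

variable {P T E : Type} {N : SyncPN P T E}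

theorem enabled_mono {M M' : P → ℕ} (h : M ≤ M') {t : T} (ht : enabled N M t) :
    enabled N M' t :=
  fun p => (ht p).trans (h p)

theorem enabled_add_single_iff {M : P → ℕ} {p : P} {c : ℕ} {t : T} (h : N.Pre p t = 0) :
    enabled N (M + Pi.single p c) t ↔ enabled N M t := by
  refine forall_congr' fun q => ?_
  by_cases hq : q = p
  · simp only [hq, h, Nat.zero_le]
  · rw [Pi.add_apply, Pi.single_eq_of_ne hq, add_zero]

theorem enabled_iff_of_isSM {ins outs : T → P} (hSM : isSM N ins outs) {M : P → ℕ} {t : T} :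
    enabled N M t ↔ 0 < M (ins t) := by
  simp only [enabled, hSM.1]
  refine ⟨fun h => (if_pos rfl).ge.trans (h (ins t)), fun h p => ?_⟩
  split_ifs with hp
  · exact hp ▸ h
  · exact Nat.zero_le _

theorem sum_pre_eq_sum_post [Fintype P] {ins outs : T → P} (hSM : isSM N ins outs) (t : T) :
    ∑ p, N.Pre p t = ∑ p, N.Post p t := by
  simp only [hSM.1, hSM.2, Finset.sum_ite_eq', Finset.mem_univ, if_true]

variable [Fintype T]

/-- The number of tokens taken from `p` when event `e` occurs at `M`: the subtracted sum
in `step`. -/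
noncomputable def consumed (N : SyncPN P T E) (M : P → ℕ) (e : E) (p : P) : ℕ :=
  ∑ t : T, if N.f t = e ∧ enabled N M t then N.Pre p t else 0

/-- The number of tokens put into `p` when event `e` occurs at `M`: the added sum in `step`. -/
noncomputable def produced (N : SyncPN P T E) (M : P → ℕ) (e : E) (p : P) : ℕ :=
  ∑ t : T, if N.f t = e ∧ enabled N M t then N.Post p t else 0

theorem step_apply (M : P → ℕ) (e : E) (p : P) :
    step N M e p = M p + produced N M e p - consumed N M e p :=
  rfl

theorem consumed_eq_zero {e : E} {p : P} (h : ∀ t, N.f t = e → N.Pre p t = 0) (M : P → ℕ) :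
    consumed N M e p = 0 := by
  refine Finset.sum_eq_zero fun t _ => ?_
  split_ifs with ht
  · exact h t ht.1
  · rfl

theorem consumed_eq_ite (hdet : deterministic N) {p : P} {t : T} (ht : N.Pre p t ≠ 0)
    (M : P → ℕ) : consumed N M (N.f t) p = if enabled N M t then N.Pre p t else 0 := by
  have hother : ∀ t' ≠ t, N.f t' = N.f t → N.Pre p t' = 0 := fun t' hne hf =>
    by_contra fun ht' =>
      hdet p t' t hne (Nat.one_le_iff_ne_zero.2 ht') (Nat.one_le_iff_ne_zero.2 ht) hf
  rw [consumed, Fintype.sum_eq_single t]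
  · simp only [true_and]
  · intro t' hne
    split_ifs with h
    · exact hother t' hne h.1
    · rfl

theorem consumed_le (hdet : deterministic N) (M : P → ℕ) (e : E) (p : P) :
    consumed N M e p ≤ M p := by
  by_cases h : ∃ t, N.f t = e ∧ N.Pre p t ≠ 0
  · obtain ⟨t, rfl, ht⟩ := h
    rw [consumed_eq_ite hdet ht]
    split_ifs with hen
    · exact hen p
    · exact Nat.zero_le _
  · push Not at h
    exact (consumed_eq_zero h M).trans_le (Nat.zero_le _)

theorem produced_mono {M M' : P → ℕ} (h : M ≤ M') (e : E) (p : P) :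
    produced N M e p ≤ produced N M' e p := by
  refine Finset.sum_le_sum fun t _ => ?_
  split_ifs with ht ht'
  · rfl
  · exact absurd ⟨ht.1, enabled_mono h ht.2⟩ ht'
  · exact Nat.zero_le _
  · rfl

theorem step_add_single {e : E} {p : P} (h : ∀ t, N.f t = e → N.Pre p t = 0) (M : P → ℕ)
    (c : ℕ) : step N (M + Pi.single p c) e = step N M e + Pi.single p c := by
  have hen : ∀ t, (N.f t = e ∧ enabled N (M + Pi.single p c) t) ↔ (N.f t = e ∧ enabled N M t) :=
    fun t => and_congr_right fun ht => enabled_add_single_iff (h t ht)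
  have hproduced : produced N (M + Pi.single p c) e = produced N M e := by
    funext q
    simp only [produced, hen]
  have hconsumed : consumed N (M + Pi.single p c) e = consumed N M e := by
    funext q
    simp only [consumed, hen]
  funext q
  rw [Pi.add_apply, step_apply, step_apply, Pi.add_apply, hproduced, hconsumed]
  by_cases hq : q = p
  · subst hq
    rw [consumed_eq_zero h, Nat.sub_zero, Nat.sub_zero, add_right_comm]
  · rw [Pi.single_eq_of_ne hq, add_zero, add_zero]

theorem sum_step [Fintype P] (hdet : deterministic N)
    (hcons : ∀ t, ∑ p, N.Pre p t = ∑ p, N.Post p t) (M : P → ℕ) (e : E) :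
    ∑ p, step N M e p = ∑ p, M p := by
  have hbalance : ∑ p, consumed N M e p = ∑ p, produced N M e p := by
    simp only [consumed, produced]
    rw [Finset.sum_comm, Finset.sum_comm (γ := P)]
    refine Finset.sum_congr rfl fun t _ => ?_
    split_ifs
    · exact hcons t
    · rfl
  have hstep : ∀ p, step N M e p + consumed N M e p = M p + produced N M e p := fun p =>
    Nat.sub_add_cancel ((consumed_le hdet M e p).trans (Nat.le_add_right _ _))
  have hsum := Fintype.sum_congr _ _ hstep
  rw [Finset.sum_add_distrib, Finset.sum_add_distrib, hbalance] at hsum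
  exact Nat.add_right_cancel hsum

theorem sub_consumed_mono {ins outs : T → P} (hSM : isSM N ins outs) (hdet : deterministic N)
    {M M' : P → ℕ} (h : M ≤ M') (e : E) (p : P) :
    M p - consumed N M e p ≤ M' p - consumed N M' e p := by
  have hp : M p ≤ M' p := h p
  by_cases hout : ∃ t, N.f t = e ∧ N.Pre p t ≠ 0
  · obtain ⟨t, rfl, ht⟩ := hout
    have hin : p = ins t := by
      by_contra hne
      exact ht ((hSM.1 p t).trans (if_neg hne))
    have hone : N.Pre p t = 1 := (hSM.1 p t).trans (if_pos hin)
    rw [consumed_eq_ite hdet ht, consumed_eq_ite hdet ht, enabled_iff_of_isSM hSM,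
      enabled_iff_of_isSM hSM, ← hin, hone]
    split_ifs <;> omega
  · push Not at hout
    rwa [consumed_eq_zero hout, consumed_eq_zero hout]

theorem step_mono {ins outs : T → P} (hSM : isSM N ins outs) (hdet : deterministic N) (e : E) :
    Monotone fun M => step N M e := by
  intro M M' h p
  simp only [step_apply]
  rw [Nat.sub_add_comm (consumed_le hdet M e p), Nat.sub_add_comm (consumed_le hdet M' e p)]
  exact Nat.add_le_add (sub_consumed_mono hSM hdet h e p) (produced_mono h e p)

theorem stepWord_append (M : P → ℕ) (v w : List E) :
    stepWord N M (v ++ w) = stepWord N (stepWord N M v) w :=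
  List.foldl_append

theorem stepWord_add_single {w : List E} {p : P}
    (h : ∀ e ∈ w, ∀ t, N.f t = e → N.Pre p t = 0) (M : P → ℕ) (c : ℕ) :
    stepWord N (M + Pi.single p c) w = stepWord N M w + Pi.single p c := by
  induction w generalizing M with
  | nil => rfl
  | cons e w ih =>
    rw [List.forall_mem_cons] at h
    calc stepWord N (step N (M + Pi.single p c) e) w
        = stepWord N (step N M e + Pi.single p c) w := by rw [step_add_single h.1]
      _ = stepWord N (step N M e) w + Pi.single p c := ih h.2 _

theorem sum_stepWord [Fintype P] (hdet : deterministic N)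
    (hcons : ∀ t, ∑ p, N.Pre p t = ∑ p, N.Post p t) (M : P → ℕ) (w : List E) :
    ∑ p, stepWord N M w p = ∑ p, M p := by
  induction w generalizing M with
  | nil => rfl
  | cons e w ih => exact (ih _).trans (sum_step hdet hcons M e)

theorem stepWord_mono {ins outs : T → P} (hSM : isSM N ins outs) (hdet : deterministic N)
    (w : List E) : Monotone fun M => stepWord N M w := by
  intro M M' h
  induction w generalizing M M' with
  | nil => exact h
  | cons e _ ih => exact ih (step_mono hSM hdet e h)

section Synchronizing

variable {ins outs : T → P} {p : P} {w : List E}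

theorem stepWord_apply_add_le (hSM : isSM N ins outs) (hdet : deterministic N)
    (hout : ∀ e ∈ w, ∀ t, N.f t = e → N.Pre p t = 0) {L M : P → ℕ} {c : ℕ}
    (h : L + Pi.single p c ≤ M) : stepWord N L w p + c ≤ stepWord N M w p :=
  calc stepWord N L w p + c
      = stepWord N (L + Pi.single p c) w p := by
        rw [stepWord_add_single hout, Pi.add_apply, Pi.single_eq_same]
    _ ≤ stepWord N M w p := stepWord_mono hSM hdet w h p

theorem apply_le_stepWord_apply (hSM : isSM N ins outs) (hdet : deterministic N)
    (hout : ∀ e ∈ w, ∀ t, N.f t = e → N.Pre p t = 0) (M : P → ℕ) :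
    M p ≤ stepWord N M w p := by
  have hle : 0 + Pi.single p (M p) ≤ M := by
    rw [zero_add]
    exact update_le_iff.2 ⟨le_rfl, fun _ _ => Nat.zero_le _⟩
  exact (Nat.le_add_left _ _).trans (stepWord_apply_add_le hSM hdet hout hle)

theorem apply_lt_stepWord_apply (hSM : isSM N ins outs) (hdet : deterministic N)
    (hout : ∀ e ∈ w, ∀ t, N.f t = e → N.Pre p t = 0) {q : P}
    (hsync : stepWord N (Pi.single q 1) w = Pi.single p 1) (hqp : q ≠ p) {M : P → ℕ}
    (hq : 0 < M q) : M p < stepWord N M w p := by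
  have hle : Pi.single q 1 + Pi.single p (M p) ≤ M := by
    intro x
    rw [Pi.add_apply, Pi.single_apply, Pi.single_apply]
    split_ifs with hxq hxp hxp
    · exact absurd (hxq.symm.trans hxp) hqp
    · exact hxq ▸ hq
    · rw [hxp, zero_add]
    · exact Nat.zero_le _
  have h := stepWord_apply_add_le hSM hdet hout hle
  rw [hsync, Pi.single_eq_same] at h
  omega

variable [Fintype P]

theorem sum_le_stepWord_apply_add (hSM : isSM N ins outs) (hdet : deterministic N)
    (hout : ∀ e ∈ w, ∀ t, N.f t = e → N.Pre p t = 0)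
    (hsync : ∀ q, stepWord N (Pi.single q 1) w = Pi.single p 1) {M : P → ℕ} {n : ℕ}
    (hM : ∑ q, M q ≤ M p + (n + 1)) : ∑ q, M q ≤ stepWord N M w p + n := by
  by_cases h : ∃ q, q ≠ p ∧ 0 < M q
  · obtain ⟨q, hqp, hq⟩ := h
    have := apply_lt_stepWord_apply hSM hdet hout (hsync q) hqp hq
    omega
  · push Not at h
    have hsum : ∑ q, M q = M p :=
      Fintype.sum_eq_single p fun q hqp => Nat.le_zero.1 (h q hqp)
    have := apply_le_stepWord_apply hSM hdet hout M
    omega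

theorem sum_le_stepWord_replicate_apply (hSM : isSM N ins outs) (hdet : deterministic N)
    (hout : ∀ e ∈ w, ∀ t, N.f t = e → N.Pre p t = 0)
    (hsync : ∀ q, stepWord N (Pi.single q 1) w = Pi.single p 1) {M : P → ℕ} {n : ℕ}
    (hM : ∑ q, M q ≤ M p + n) :
    ∑ q, M q ≤ stepWord N M (List.replicate n w).flatten p := by
  induction n generalizing M with
  | zero => exact hM
  | succ n ih =>
    have hsum : ∑ q, stepWord N M w q = ∑ q, M q :=
      sum_stepWord hdet (sum_pre_eq_sum_post hSM) M w
    rw [List.replicate_succ, List.flatten_cons, stepWord_append, ← hsum]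
    refine ih ?_
    rw [hsum]
    exact sum_le_stepWord_apply_add hSM hdet hout hsync hM

end Synchronizing

end SyncPN

theorem one_SS_pow_k_is_k_SS_general {P T E : Type} [Fintype P] [Fintype T]
    (N : SyncPN P T E) (ins outs : T → P)
    (hSM : isSM N ins outs) (hdet : deterministic N)
    (pbar : P) (w : List E)
    (h1SS : ∀ M : P → ℕ, (∑ p : P, M p = 1) →
      stepWord N M w = fun p => if p = pbar then 1 else 0)
    (hout : ∀ e ∈ w, ∀ t : T, ins t = pbar → N.f t ≠ e)
    (n : ℕ) (M : P → ℕ) (hM : ∑ p : P, M p ≤ M pbar + n) :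
    stepWord N M ((List.replicate n w).flatten) =
      fun p => if p = pbar then ∑ q : P, M q else 0 := by
  have hpre : ∀ e ∈ w, ∀ t, N.f t = e → N.Pre pbar t = 0 := fun e he t ht =>
    (hSM.1 pbar t).trans (if_neg fun hin => hout e he t hin.symm ht)
  have hsync : ∀ q, stepWord N (Pi.single q 1) w = Pi.single pbar 1 := fun q =>
    (h1SS _ (Fintype.sum_pi_single' q 1)).trans
      (funext fun p => (Pi.single_apply pbar 1 p).symm)
  have hsum := SyncPN.sum_stepWord hdet (SyncPN.sum_pre_eq_sum_post hSM) M
    (List.replicate n w).flatten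
  have hle := SyncPN.sum_le_stepWord_replicate_apply hSM hdet hpre hsync hM
  rw [eq_pi_single_of_sum_le_apply (hsum.trans_le hle), hsum]
  exact funext fun p => Pi.single_apply pbar _ p

/-- Proposition 4: if `w` is a 1-SS for `p̄` and no letter of `w` labels an output
transition of `p̄`, then `w^k` is a `k`-SS moving all `k` tokens to `p̄`. -/
theorem one_SS_pow_k_is_k_SS {P T E : Type} [Fintype P] [Fintype T]
    (N : SyncPN P T E) (ins outs : T → P)
    (hSM : isSM N ins outs) (hdet : deterministic N)
    (hsc : stronglyConnected ins outs)
    (pbar : P) (w : List E)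
    (h1SS : ∀ M : P → ℕ, (∑ p : P, M p = 1) →
      stepWord N M w = fun p => if p = pbar then 1 else 0)
    (hout : ∀ e ∈ w, ∀ t : T, ins t = pbar → N.f t ≠ e) :
    ∀ k : ℕ, 1 ≤ k → ∀ M : P → ℕ, (∑ p : P, M p = k) →
      stepWord N M ((List.replicate k w).flatten) =
        fun p => if p = pbar then k else 0 := by
  intro k _ M hM
  simpa only [hM] using one_SS_pow_k_is_k_SS_general N ins outs hSM hdet pbar w h1SS hout k M
    (hM.trans_le (Nat.le_add_left k _))
end

section
/- Let ⟨N, E, f⟩ be a deterministic synchronized Petri net with P = Ps ⊎ Pz and T = Ts ⊎ Tz, such that every t ∈ Ts has exactly one input place ins(t) ∈ Ps and one output place outs(t) ∈ Ps with Pre(ins(t), t) = Post(outs(t), t) = 1 and Pre(p, t) = Post(p, t) = 0 for all other p ∈ Ps (the restriction to (Ps, Ts) is a state machine subnet), and such that every t ∈ Tz satisfies Pre(p, t) = Post(p, t) = 0 for all p ∈ Ps (condition i). Then for every marking M and every input event e ∈ E: Σ_{p∈Ps} step(M, e)(p) = Σ_{p∈Ps} M(p), i.e. the token count in the state machine subnet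 is invariant. -/
open scoped Classical BigOperators

/-!
In a deterministic net at most one of the simultaneously fired transitions consumes from a given
place, and it is enabled, so the subtraction defining `step` never truncates. Firing thus obeys a
genuine flow equation at each place. Summed over `Ps`, the flow in and the flow out cancel
transition by transition: a transition of the state machine moves exactly one token within `Ps`,
and any other transition leaves `Ps` untouched.
-/

namespace SyncPN

variable {P T E : Type} {N : SyncPN P T E}

/-- The set of transitions that fire simultaneously when the event `e` occurs at the marking
`M`. -/
noncomputable def fired [Fintype T] (N : SyncPN P T E) (M : P → ℕ) (e : E) : Finset T :=
  {t | N.f t = e ∧ enabled N M t}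

/-- Determinism localized at a place `p`: distinct output transitions of `p` carry distinct
labels. Thus `deterministic N` unfolds to `∀ p, N.DeterministicAt p`. -/
def DeterministicAt (N : SyncPN P T E) (p : P) : Prop :=
  ∀ t t' : T, t ≠ t' → 1 ≤ N.Pre p t → 1 ≤ N.Pre p t' → N.f t ≠ N.f t'

/-- Conservativeness of a finite set of places: its indicator vector is a place invariant
(P-semiflow) of the net. -/
def IsConservativeOn (N : SyncPN P T E) (Ps : Finset P) : Prop :=
  ∀ t, ∑ p ∈ Ps, N.Pre p t = ∑ p ∈ Ps, N.Post p t

theorem isConservativeOn_of_stateMachine_subnet {Ps : Finset P} {Ts : Finset T} {ins outs : T → P}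
    (hin : ∀ t ∈ Ts, ins t ∈ Ps) (hout : ∀ t ∈ Ts, outs t ∈ Ps)
    (hPre : ∀ t ∈ Ts, ∀ p ∈ Ps, N.Pre p t = if p = ins t then 1 else 0)
    (hPost : ∀ t ∈ Ts, ∀ p ∈ Ps, N.Post p t = if p = outs t then 1 else 0)
    (hTz : ∀ t ∉ Ts, ∀ p ∈ Ps, N.Pre p t = 0 ∧ N.Post p t = 0) :
    N.IsConservativeOn Ps := by
  intro t
  by_cases ht : t ∈ Ts
  · calc ∑ p ∈ Ps, N.Pre p t
        = ∑ p ∈ Ps, if p = ins t then 1 else 0 := Finset.sum_congr rfl (hPre t ht)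
      _ = 1 := by rw [Finset.sum_ite_eq', if_pos (hin t ht)]
      _ = ∑ p ∈ Ps, if p = outs t then 1 else 0 := by rw [Finset.sum_ite_eq', if_pos (hout t ht)]
      _ = ∑ p ∈ Ps, N.Post p t := (Finset.sum_congr rfl (hPost t ht)).symm
  · exact Finset.sum_congr rfl fun p hp => (hTz t ht p hp).1.trans (hTz t ht p hp).2.symm

theorem IsConservativeOn.sum_sum_pre_eq_sum_sum_post {Ps : Finset P}
    (hPs : N.IsConservativeOn Ps) (S : Finset T) :
    ∑ p ∈ Ps, ∑ t ∈ S, N.Pre p t = ∑ p ∈ Ps, ∑ t ∈ S, N.Post p t := by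
  rw [Finset.sum_comm, Finset.sum_congr rfl fun t _ => hPs t, Finset.sum_comm]

variable [Fintype T] {M : P → ℕ} {e : E} {p : P}

theorem mem_fired {t : T} : t ∈ N.fired M e ↔ N.f t = e ∧ enabled N M t :=
  Finset.mem_filter_univ t

theorem DeterministicAt.eq_of_mem_fired (hp : N.DeterministicAt p) {t t' : T}
    (ht : t ∈ N.fired M e) (ht' : t' ∈ N.fired M e) (hpre : N.Pre p t ≠ 0)
    (hpre' : N.Pre p t' ≠ 0) : t = t' := by
  by_contra hne
  have hlabel : N.f t = N.f t' := (mem_fired.mp ht).1.trans (mem_fired.mp ht').1.symm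
  exact hp t t' hne (Nat.one_le_iff_ne_zero.mpr hpre) (Nat.one_le_iff_ne_zero.mpr hpre') hlabel

theorem DeterministicAt.sum_pre_fired_le (hp : N.DeterministicAt p) (M : P → ℕ) (e : E) :
    ∑ t ∈ N.fired M e, N.Pre p t ≤ M p := by
  by_cases hconsumer : ∃ t₀ ∈ N.fired M e, N.Pre p t₀ ≠ 0
  · obtain ⟨t₀, ht₀, hpre⟩ := hconsumer
    have hunique : ∀ t ∈ N.fired M e, t ≠ t₀ → N.Pre p t = 0 := fun t ht hne =>
      by_contra fun h => hne (hp.eq_of_mem_fired ht ht₀ h hpre)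
    calc ∑ t ∈ N.fired M e, N.Pre p t
        = N.Pre p t₀ := Finset.sum_eq_single_of_mem t₀ ht₀ hunique
      _ ≤ M p := (mem_fired.mp ht₀).2 p
  · push Not at hconsumer
    exact (Finset.sum_eq_zero hconsumer).trans_le (Nat.zero_le _)

theorem step_eq_sub (N : SyncPN P T E) (M : P → ℕ) (e : E) (p : P) :
    step N M e p =
      M p + ∑ t ∈ N.fired M e, N.Post p t - ∑ t ∈ N.fired M e, N.Pre p t := by
  simp only [step, fired, Finset.sum_filter]

theorem DeterministicAt.step_add_sum_pre_fired (hp : N.DeterministicAt p) (M : P → ℕ) (e : E) :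
    step N M e p + ∑ t ∈ N.fired M e, N.Pre p t = M p + ∑ t ∈ N.fired M e, N.Post p t := by
  rw [step_eq_sub]
  exact Nat.sub_add_cancel (le_add_right (hp.sum_pre_fired_le M e))

end SyncPN

theorem subnet_token_count_invariant_general {P T E : Type} [Fintype T] {N : SyncPN P T E}
    {Ps : Finset P} (hdet : ∀ p ∈ Ps, N.DeterministicAt p) (hPs : N.IsConservativeOn Ps)
    (M : P → ℕ) (e : E) : ∑ p ∈ Ps, step N M e p = ∑ p ∈ Ps, M p := by
  have hflow : ∑ p ∈ Ps, step N M e p + ∑ p ∈ Ps, ∑ t ∈ N.fired M e, N.Pre p t =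
      ∑ p ∈ Ps, M p + ∑ p ∈ Ps, ∑ t ∈ N.fired M e, N.Post p t := by
    simp only [← Finset.sum_add_distrib]
    exact Finset.sum_congr rfl fun p hp => (hdet p hp).step_add_sum_pre_fired M e
  rw [hPs.sum_sum_pre_eq_sum_sum_post] at hflow
  exact Nat.add_right_cancel hflow

/-- Invariance of the token count of a state machine subnet (proof of Proposition 7):
if `(Ps, Ts)` is a state machine subnet of a deterministic synchronized Petri net and
no transition outside `Ts` is connected to a place of `Ps`, then the token count in
`Ps` is invariant under the occurrence of any input event. -/
theorem subnet_token_count_invariant {P T E : Type} [Fintype P] [Fintype T]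
    (N : SyncPN P T E) (hdet : deterministic N)
    (Ps : Finset P) (Ts : Finset T) (ins outs : T → P)
    (hin : ∀ t ∈ Ts, ins t ∈ Ps)
    (hout : ∀ t ∈ Ts, outs t ∈ Ps)
    (hPre : ∀ t ∈ Ts, ∀ p ∈ Ps, N.Pre p t = if p = ins t then 1 else 0)
    (hPost : ∀ t ∈ Ts, ∀ p ∈ Ps, N.Post p t = if p = outs t then 1 else 0)
    (hTz : ∀ t ∉ Ts, ∀ p ∈ Ps, N.Pre p t = 0 ∧ N.Post p t = 0) :
    ∀ (M : P → ℕ) (e : E), ∑ p ∈ Ps, step N M e p = ∑ p ∈ Ps, M p :=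
  subnet_token_count_invariant_general (fun p _ => hdet p)
    (SyncPN.isConservativeOn_of_stateMachine_subnet hin hout hPre hPost hTz)
end

section
/- Let ⟨N, E, f⟩ be a deterministic synchronized Petri net with P = Ps ⊎ Pz and T = Ts ⊎ Tz, such that every t ∈ Ts has exactly one input place ins(t) ∈ Ps and one output place outs(t) ∈ Ps with Pre(ins(t), t) = Post(outs(t), t) = 1 and Pre(p, t) = Post(p, t) = 0 for all other p ∈ Ps, and such that every t ∈ Tz satisfies Pre(p, t) = Post(p, t) = 0 for all p ∈ Ps (condition i). Let Ns be the synchronized state machine with places Ps, transitions Ts, input place ins, output place outs and labeling f restricted to Ts. Let e ∈ E be an event such that no t ∈ Ts with f(t) = e has an input place in Pz, i.e. Pre(p, t) = 0 for all p ∈ Pz whenever t ∈ Ts and f(t) = e (condition ii). Then for every marking M of N and every p ∈ Ps: step_N(M, e)(p) = step_{Ns}(M|_{Ps}, e)(p), where M|_{Ps} denotes the restriction of M to Ps. -/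
open scoped Classical BigOperators

/-- The synchronized state machine `Ns` induced by a state machine subnet
`(Ps, Ts)` with input place map `ins`, output place map `outs` and labeling `f`. -/
noncomputable def subSM {P T E : Type} (Ps : Finset P) (Ts : Finset T)
    (ins outs : T → P) (f : T → E) :
    SyncPN {p // p ∈ Ps} {t // t ∈ Ts} E where
  Pre := fun q t => if (q : P) = ins t then 1 else 0
  Post := fun q t => if (q : P) = outs t then 1 else 0
  f := fun t => f t

namespace SyncPN

variable {P P' T T' E : Type}

/-- The net pulled back along maps of places and transitions. For inclusions this is the subnet on
`P'` and `T'` in isolation, all arcs leading out of it being cut; plain maps are used so that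
subsets of any kind (`Set`, `Finset`, predicates) are covered. -/
def comap (N : SyncPN P T E) (φ : P' → P) (ψ : T' → T) : SyncPN P' T' E where
  Pre p t := N.Pre (φ p) (ψ t)
  Post p t := N.Post (φ p) (ψ t)
  f t := N.f (ψ t)

theorem enabled_comap_iff (N : SyncPN P T E) {φ : P' → P} {ψ : T' → T} (M : P → ℕ) {t : T'}
    (hPre : ∀ p ∉ Set.range φ, N.Pre p (ψ t) = 0) :
    enabled (N.comap φ ψ) (M ∘ φ) t ↔ enabled N M (ψ t) := by
  refine ⟨fun h p => ?_, fun h p => h (φ p)⟩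
  by_cases hp : p ∈ Set.range φ
  · obtain ⟨q, rfl⟩ := hp
    exact h q
  · exact (hPre p hp).trans_le (Nat.zero_le _)

theorem sum_fired_comap {R : Type*} [AddCommMonoid R] [Fintype T] [Fintype T']
    (N : SyncPN P T E) {φ : P' → P} {ψ : T' → T} (hψ : Function.Injective ψ) {e : E}
    (hPre : ∀ t, N.f (ψ t) = e → ∀ p ∉ Set.range φ, N.Pre p (ψ t) = 0)
    (M : P → ℕ) {w : T → R} (hw : ∀ t ∉ Set.range ψ, w t = 0) :
    (∑ t, if (N.comap φ ψ).f t = e ∧ enabled (N.comap φ ψ) (M ∘ φ) t then w (ψ t) else 0) =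
      ∑ t, if N.f t = e ∧ enabled N M t then w t else 0 := by
  refine Fintype.sum_of_injective ψ hψ _ _ (fun t ht => ?_) (fun t => ?_)
  · rw [hw t ht, ite_self]
  · exact if_congr (and_congr_right fun hf => N.enabled_comap_iff M (hPre t hf)) rfl rfl

end SyncPN

theorem subSM_eq_comap {P T E : Type} (N : SyncPN P T E) {Ps : Finset P} {Ts : Finset T}
    {ins outs : T → P}
    (hPre : ∀ t ∈ Ts, ∀ p ∈ Ps, N.Pre p t = if p = ins t then 1 else 0)
    (hPost : ∀ t ∈ Ts, ∀ p ∈ Ps, N.Post p t = if p = outs t then 1 else 0) :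
    subSM Ps Ts ins outs N.f = N.comap Subtype.val Subtype.val := by
  simp only [subSM, SyncPN.comap, SyncPN.mk.injEq, and_true]
  exact ⟨funext₂ fun p t => (hPre t t.2 p p.2).symm, funext₂ fun p t => (hPost t t.2 p p.2).symm⟩

-- The produced and the consumed tokens agree separately, so the truncation of the subtraction in
-- `step` is harmless.
theorem subnet_step_agrees_general {P P' T T' E : Type} [Fintype T] [Fintype T']
    (N : SyncPN P T E) (φ : P' → P) {ψ : T' → T} (hψ : Function.Injective ψ) {e : E}
    (hPre : ∀ t, N.f (ψ t) = e → ∀ p ∉ Set.range φ, N.Pre p (ψ t) = 0)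
    (M : P → ℕ) (p : P')
    (hisolated : ∀ t ∉ Set.range ψ, N.Pre (φ p) t = 0 ∧ N.Post (φ p) t = 0) :
    step N M e (φ p) = step (N.comap φ ψ) (M ∘ φ) e p := by
  have produced := N.sum_fired_comap hψ hPre M fun t ht => (hisolated t ht).2
  have consumed := N.sum_fired_comap hψ hPre M fun t ht => (hisolated t ht).1
  exact (congrArg₂ (M (φ p) + · - ·) produced consumed).symm

/-- One-step version of Proposition 7: under conditions i) and ii), the state
machine subnet evolves in the full net `N` exactly as it would in isolation. -/
theorem subnet_step_agrees {P T E : Type} [Fintype P] [Fintype T]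
    (N : SyncPN P T E) (hdet : deterministic N)
    (Ps : Finset P) (Ts : Finset T) (ins outs : T → P)
    (hin : ∀ t ∈ Ts, ins t ∈ Ps)
    (hout : ∀ t ∈ Ts, outs t ∈ Ps)
    (hPre : ∀ t ∈ Ts, ∀ p ∈ Ps, N.Pre p t = if p = ins t then 1 else 0)
    (hPost : ∀ t ∈ Ts, ∀ p ∈ Ps, N.Post p t = if p = outs t then 1 else 0)
    (hTz : ∀ t ∉ Ts, ∀ p ∈ Ps, N.Pre p t = 0 ∧ N.Post p t = 0)
    (e : E)
    (hii : ∀ t ∈ Ts, N.f t = e → ∀ p ∉ Ps, N.Pre p t = 0) :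
    ∀ (M : P → ℕ) (p : P) (hp : p ∈ Ps),
      step N M e p =
        step (subSM Ps Ts ins outs N.f) (fun q => M q) e ⟨p, hp⟩ := by
  intro M p hp
  rw [subSM_eq_comap N hPre hPost]
  exact subnet_step_agrees_general N Subtype.val Subtype.val_injective
    (fun t hf => by simpa using hii t t.2 hf) M ⟨p, hp⟩ (by simpa using fun t ht => hTz t ht p hp)
end

section
/- Let ⟨N, E, f⟩ be a deterministic synchronized Petri net with P = Ps ⊎ Pz and T = Ts ⊎ Tz, such that every t ∈ Ts has exactly one input place ins(t) ∈ Ps and one output place outs(t) ∈ Ps with Pre(ins(t), t) = Post(outs(t), t) = 1 and Pre(p, t) = Post(p, t) = 0 for all other p ∈ Ps, and such that every t ∈ Tz satisfies Pre(p, t) = Post(p, t) = 0 for all p ∈ Ps (condition i). Let Ns be the synchronized state machine with places Ps, transitions Ts, input place ins, output place outs and labeling f restricted to Ts, and let κ ∈ ℕ. Let w̄ ∈ E* be a synchronizing sequence of Ns for target marking M̄s, i.e. Ms →w̄ M̄s in Ns for every marking Ms of Ns with Σ_{p∈Ps} Ms(p) = κ. Suppose condition ii holds for every letter e of w̄: no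 t ∈ Ts with f(t) = e has an input place in Pz. Then for every marking M of N with Σ_{p∈Ps} M(p) = κ, if M →w̄ M' in N then M'(p) = M̄s(p) for all p ∈ Ps. -/
open scoped Classical BigOperators

/-!
Under condition i only transitions of the subnet change the marking of its places, and under
condition ii whether such a transition fires depends only on that marking. Restricting markings to
the subnet therefore commutes with the occurrence of each letter of the word, so the full net is
driven on these places exactly as the subnet is.
-/

namespace SyncPN

variable {P T E P₀ T₀ : Type} {N : SyncPN P T E} {N₀ : SyncPN P₀ T₀ E} {i : P₀ → P} {j : T₀ ↪ T}

/-- `N₀` is the restriction of `N` along the maps `i` of places and `j` of transitions. The last two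
fields are condition i: the transitions of `N` outside the range of `j` have no arcs to or from
places in the range of `i`. -/
structure IsRestriction (N₀ : SyncPN P₀ T₀ E) (N : SyncPN P T E) (i : P₀ → P) (j : T₀ ↪ T) :
    Prop where
  pre_eq : ∀ q t, N₀.Pre q t = N.Pre (i q) (j t)
  post_eq : ∀ q t, N₀.Post q t = N.Post (i q) (j t)
  label_eq : ∀ t, N₀.f t = N.f (j t)
  pre_eq_zero : ∀ q, ∀ t ∉ Set.range j, N.Pre (i q) t = 0
  post_eq_zero : ∀ q, ∀ t ∉ Set.range j, N.Post (i q) t = 0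

/-- Condition ii for the event `e`: the transitions labeled `e` in the range of `j` take tokens
only from places in the range of `i`. -/
def InputsInRange (N : SyncPN P T E) (i : P₀ → P) (j : T₀ ↪ T) (e : E) : Prop :=
  ∀ t, N.f (j t) = e → ∀ p ∉ Set.range i, N.Pre p (j t) = 0

namespace IsRestriction

lemma enabled_iff (h : IsRestriction N₀ N i j) {t : T₀}
    (ht : ∀ p ∉ Set.range i, N.Pre p (j t) = 0) (M : P → ℕ) :
    enabled N M (j t) ↔ enabled N₀ (M ∘ i) t := by
  refine ⟨fun hen q => (h.pre_eq q t).trans_le (hen (i q)), fun hen p => ?_⟩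
  by_cases hp : p ∈ Set.range i
  · obtain ⟨q, rfl⟩ := hp
    exact (h.pre_eq q t).symm.trans_le (hen q)
  · exact (ht p hp).trans_le (Nat.zero_le _)

variable [Fintype T] [Fintype T₀]

lemma sum_firing_eq (h : IsRestriction N₀ N i j) {e : E} (he : InputsInRange N i j e)
    (M : P → ℕ) {c : T → ℕ} (hc : ∀ t ∉ Set.range j, c t = 0) :
    (∑ t, if N.f t = e ∧ enabled N M t then c t else 0) =
      ∑ t, if N₀.f t = e ∧ enabled N₀ (M ∘ i) t then c (j t) else 0 := by
  have firing_iff (t : T₀) :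
      (N₀.f t = e ∧ enabled N₀ (M ∘ i) t) ↔ (N.f (j t) = e ∧ enabled N M (j t)) := by
    rw [h.label_eq]
    exact and_congr_right fun hte => (h.enabled_iff (he t hte) M).symm
  refine (Fintype.sum_of_injective j j.injective _ _ (fun t ht => ?_) fun t => ?_).symm
  · rw [hc t ht, ite_self]
  · simp only [firing_iff]

lemma step_comp (h : IsRestriction N₀ N i j) {e : E} (he : InputsInRange N i j e) (M : P → ℕ) :
    step N M e ∘ i = step N₀ (M ∘ i) e := by
  funext q
  simp only [step, Function.comp_apply, h.sum_firing_eq he M (h.post_eq_zero q),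
    h.sum_firing_eq he M (h.pre_eq_zero q), h.post_eq, h.pre_eq]

lemma stepWord_comp (h : IsRestriction N₀ N i j) {w : List E}
    (hw : ∀ e ∈ w, InputsInRange N i j e) (M : P → ℕ) :
    stepWord N M w ∘ i = stepWord N₀ (M ∘ i) w := by
  induction w generalizing M with
  | nil => rfl
  | cons e w ih =>
    obtain ⟨he, hw⟩ := List.forall_mem_cons.mp hw
    calc stepWord N (step N M e) w ∘ i
      _ = stepWord N₀ (step N M e ∘ i) w := ih hw (step N M e)
      _ = stepWord N₀ (step N₀ (M ∘ i) e) w := by rw [h.step_comp he]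

end IsRestriction

lemma isRestriction_subSM {Ps : Finset P} {Ts : Finset T} {ins outs : T → P}
    (hPre : ∀ t ∈ Ts, ∀ p ∈ Ps, N.Pre p t = if p = ins t then 1 else 0)
    (hPost : ∀ t ∈ Ts, ∀ p ∈ Ps, N.Post p t = if p = outs t then 1 else 0)
    (hTz : ∀ t ∉ Ts, ∀ p ∈ Ps, N.Pre p t = 0 ∧ N.Post p t = 0) :
    IsRestriction (subSM Ps Ts ins outs N.f) N Subtype.val (.subtype (· ∈ Ts)) where
  pre_eq q t := (hPre t t.2 q q.2).symm
  post_eq q t := (hPost t t.2 q q.2).symm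
  label_eq _ := rfl
  pre_eq_zero q t ht := (hTz t (fun hmem => ht ⟨⟨t, hmem⟩, rfl⟩) q q.2).1
  post_eq_zero q t ht := (hTz t (fun hmem => ht ⟨⟨t, hmem⟩, rfl⟩) q q.2).2

lemma inputsInRange_subtype_iff {Ps : Finset P} {Ts : Finset T} {e : E} :
    N.InputsInRange (Subtype.val : {p // p ∈ Ps} → P) (.subtype (· ∈ Ts)) e ↔
      ∀ t ∈ Ts, N.f t = e → ∀ p ∉ Ps, N.Pre p t = 0 := by
  simp [InputsInRange]

end SyncPN

theorem subnet_SS_synchronizes_general {P T E P₀ T₀ : Type} [Fintype T] [Fintype P₀] [Fintype T₀]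
    {N : SyncPN P T E} {N₀ : SyncPN P₀ T₀ E} {i : P₀ → P} {j : T₀ ↪ T}
    (h : N₀.IsRestriction N i j) {κ : ℕ} {w : List E} {Mbar : P₀ → ℕ}
    (hSS : ∀ Ms : P₀ → ℕ, ∑ q, Ms q = κ → stepWord N₀ Ms w = Mbar)
    (hw : ∀ e ∈ w, N.InputsInRange i j e) {M : P → ℕ} (hM : ∑ q, M (i q) = κ) :
    stepWord N M w ∘ i = Mbar :=
  (h.stepWord_comp hw M).trans (hSS (M ∘ i) hM)

/-- Proposition 7: a synchronizing sequence `w̄` of a state machine subnet `Ns`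
(for token count `κ` and target marking `M̄s`), all of whose letters satisfy
condition ii), drives the full net `N` to a marking that agrees with `M̄s` on
the places of the subnet. -/
theorem subnet_SS_synchronizes {P T E : Type} [Fintype P] [Fintype T]
    (N : SyncPN P T E) (hdet : deterministic N)
    (Ps : Finset P) (Ts : Finset T) (ins outs : T → P)
    (hin : ∀ t ∈ Ts, ins t ∈ Ps)
    (hout : ∀ t ∈ Ts, outs t ∈ Ps)
    (hPre : ∀ t ∈ Ts, ∀ p ∈ Ps, N.Pre p t = if p = ins t then 1 else 0)
    (hPost : ∀ t ∈ Ts, ∀ p ∈ Ps, N.Post p t = if p = outs t then 1 else 0)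
    (hTz : ∀ t ∉ Ts, ∀ p ∈ Ps, N.Pre p t = 0 ∧ N.Post p t = 0)
    (κ : ℕ) (wbar : List E) (Mbars : {p // p ∈ Ps} → ℕ)
    (hSS : ∀ Ms : {p // p ∈ Ps} → ℕ, (∑ q, Ms q = κ) →
      stepWord (subSM Ps Ts ins outs N.f) Ms wbar = Mbars)
    (hii : ∀ e ∈ wbar, ∀ t ∈ Ts, N.f t = e → ∀ p ∉ Ps, N.Pre p t = 0) :
    ∀ M : P → ℕ, (∑ p ∈ Ps, M p = κ) →
      ∀ M' : P → ℕ, stepWord N M wbar = M' →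
        ∀ (p : P) (hp : p ∈ Ps), M' p = Mbars ⟨p, hp⟩ := by
  rintro M hM _ rfl p hp
  exact congrFun (subnet_SS_synchronizes_general (SyncPN.isRestriction_subSM hPre hPost hTz) hSS
    (fun e he => SyncPN.inputsInRange_subtype_iff.mpr (hii e he))
    ((Finset.sum_coe_sort Ps M).trans hM)) ⟨p, hp⟩
end
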